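/- arXiv:1806.05897 — 11 statements merged into one kernel-verified Lean document; each statement's English description precedes it below -/
import Mathlib

section
/- Let π and π' be duplicate-free lists over a finite type α, and assume π has at least 2 entries. Then π is a sublist of π' if and only if every complete ranking having π' as a sublist also has π as a sublist (i.e., the set of linear extensions E(π') is contained in E(π)). -/
/-!
The forward direction is transitivity of the sublist relation. For the converse, every entry `x` of
`π` must occur in `π'`: otherwise list all objects other than `x` as an extension `L` of `π'`; both
`x :: L` and `L ++ [x]` are linear extensions of `π'`, hence of `π`, so `x` is both the first and
the last entry of `π`, which is impossible when `π` has two entries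
(`length_le_one_of_sublist_cons_of_sublist_concat`). Finally, append the objects missing from `π'`
at its end; `π` is a sublist of the result, and filtering by membership in `π'` leaves `π` unchanged
and turns the result back into `π'`.
-/

open scoped Classical

lemma length_le_one_of_sublist_cons_of_sublist_concat {α : Type*} {l L : List α} {x : α}
    (hx : x ∈ l) (hxL : x ∉ L) (h₁ : l.Sublist (x :: L)) (h₂ : l.Sublist (L ++ [x])) :
    l.length ≤ 1 := by
  rcases List.sublist_cons_iff.1 h₁ with h | ⟨t, rfl, -⟩
  · exact absurd (h.subset hx) hxL
  · obtain ⟨l₁, l₂, he, hl₁, hl₂⟩ := List.sublist_append_iff.1 h₂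
    cases l₁ with
    | nil =>
      rw [he]
      simpa using hl₂.length_le
    | cons a s =>
      obtain ⟨rfl, -⟩ := List.cons.inj he
      exact absurd (hl₁.subset List.mem_cons_self) hxL

/-- for rankings with at least 2 entries, being a sublist is
equivalent to containment of the sets of linear extensions
(`E(π') ⊆ E(π)`). -/
theorem sublist_iff_linearExtensions_subset {α : Type*} [Fintype α] [DecidableEq α]
    (π π' : List α) (hπ : π.Nodup) (hπ' : π'.Nodup) (hlen : 2 ≤ π.length) :
    π.Sublist π' ↔
      ∀ p : List α, p.Nodup → (∀ x : α, x ∈ p) → π'.Sublist p → π.Sublist p := by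
  refine ⟨fun h p _ _ hp => h.trans hp, fun h => ?_⟩
  have hsub : ∀ x ∈ π, x ∈ π' := by
    intro x hx
    by_contra hx'
    set R := (Finset.univ.filter fun y => y ∉ π' ∧ y ≠ x).toList with hR
    have hmem : ∀ y, y ∈ R ↔ y ∉ π' ∧ y ≠ x := by simp [hR]
    have hxL : x ∉ π' ++ R := by simp [hmem, hx']
    have hL : (π' ++ R).Nodup :=
      hπ'.append (Finset.nodup_toList _) fun y hy hy' => ((hmem y).1 hy').1 hy
    have hall : ∀ y, y ∈ x :: (π' ++ R) := by
      intro y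
      simp only [List.mem_cons, List.mem_append, hmem]
      tauto
    have hperm : (π' ++ R ++ [x]).Perm (x :: (π' ++ R)) := List.perm_append_singleton _ _
    have hnd : (x :: (π' ++ R)).Nodup := List.nodup_cons.2 ⟨hxL, hL⟩
    have hπL : π'.Sublist (π' ++ R) := List.sublist_append_left _ _
    have h₁ := h _ hnd hall (hπL.trans (List.sublist_cons_self _ _))
    have h₂ := h _ (hperm.nodup_iff.2 hnd) (fun y => hperm.mem_iff.2 (hall y))
      (hπL.trans (List.sublist_append_left _ _))
    have := length_le_one_of_sublist_cons_of_sublist_concat hx hxL h₁ h₂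
    omega
  set R := (Finset.univ.filter fun y => y ∉ π').toList with hR
  have hmem : ∀ y, y ∈ R ↔ y ∉ π' := by simp [hR]
  have hp : π.Sublist (π' ++ R) := by
    refine h _ (hπ'.append (Finset.nodup_toList _) fun y hy hy' => (hmem y).1 hy' hy) ?_
      (List.sublist_append_left _ _)
    intro y
    simp only [List.mem_append, hmem]
    tauto
  have hf := hp.filter (fun y => decide (y ∈ π'))
  have e₁ : π.filter (fun y => decide (y ∈ π')) = π :=
    List.filter_eq_self.2 fun y hy => by simpa using hsub y hy
  have e₂ : π'.filter (fun y => decide (y ∈ π')) = π' :=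
    List.filter_eq_self.2 fun y hy => by simpa using hy
  have e₃ : R.filter (fun y => decide (y ∈ π')) = [] :=
    List.filter_eq_nil_iff.2 fun y hy => by simpa using (hmem y).1 hy
  rwa [List.filter_append, e₁, e₂, e₃, List.append_nil] at hf
end

section
/- If π_A and π_B are duplicate-free lists that are both sublists of a duplicate-free list π, then the list m obtained from π by keeping exactly those entries that belong to π_A or to π_B (List.filter) is an element of π_A ⊕ π_B and is a sublist of π. In particular, any transaction containing both π_A and π_B as sublists contains some element of π_A ⊕ π_B as a sublist. -/
/-!
In a duplicate-free list `π`, a sublist is determined by its set of entries: it equals the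
restriction of `π` to those entries (`filter_mem_eq_of_sublist`). Restricting `π` to the entries of
`πA` or `πB` and then to those of `πA` is the same as restricting to the entries of `πA` directly,
so it gives back `πA`; likewise for `πB`.
-/

open scoped Classical

/-- `oplus πA πB` is the set of consistent combinations of the rankings
`πA` and `πB`: duplicate-free lists over `entries(πA) ∪ entries(πB)` whose
restriction to the entries of `πA` (resp. `πB`) is `πA` (resp. `πB`). -/
def oplus {α : Type*} [DecidableEq α] (πA πB : List α) : Set (List α) :=
  {m | m.Nodup ∧ (∀ x, x ∈ m ↔ x ∈ πA ∨ x ∈ πB) ∧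
    m.filter (fun x => decide (x ∈ πA)) = πA ∧
    m.filter (fun x => decide (x ∈ πB)) = πB}

/-- A sublist of a duplicate-free list is recovered by filtering on membership: it is a sublist of
the filtered list, and both are duplicate-free with the same entries, hence of equal length.
The decidability instance is arbitrary so that the lemma applies to any elaboration of `decide`. -/
theorem filter_mem_eq_of_sublist {α : Type*} {l π : List α} [DecidablePred (· ∈ l)]
    (hπ : π.Nodup) (hsub : l.Sublist π) : π.filter (fun x => decide (x ∈ l)) = l := by
  have hs : l.Sublist (π.filter (fun x => decide (x ∈ l))) := by
    have h := hsub.filter (fun x => decide (x ∈ l))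
    rwa [List.filter_eq_self.2 (by simp)] at h
  have hp : l.Perm (π.filter (fun x => decide (x ∈ l))) := by
    rw [List.perm_ext_iff_of_nodup (hπ.sublist hsub) (hπ.filter _)]
    intro x
    simpa using fun hx => hsub.subset hx
  exact (hs.eq_of_length hp.length_eq).symm

/-- if `πA` and `πB` are both sublists of a duplicate-free list
`π`, then filtering `π` to the entries of `πA` or `πB` yields an element of
`πA ⊕ πB` that is a sublist of `π`. -/
theorem filter_mem_oplus_of_sublist {α : Type*} [Fintype α] [DecidableEq α]
    (πA πB π : List α) (hA : πA.Nodup) (hB : πB.Nodup) (hπ : π.Nodup)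
    (hAsub : πA.Sublist π) (hBsub : πB.Sublist π) :
    π.filter (fun x => decide (x ∈ πA ∨ x ∈ πB)) ∈ oplus πA πB ∧
      (π.filter (fun x => decide (x ∈ πA ∨ x ∈ πB))).Sublist π := by
  refine ⟨⟨hπ.filter _, fun x => ?_, ?_, ?_⟩, List.filter_sublist⟩
  · have h₁ : x ∈ πA → x ∈ π := fun h => hAsub.subset h
    have h₂ : x ∈ πB → x ∈ π := fun h => hBsub.subset h
    simp only [List.mem_filter, decide_eq_true_eq]
    tauto
  -- Each restriction absorbs the filter on the union, leaving the restriction of `π` itself.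
  · rw [List.filter_filter]
    refine Eq.trans (List.filter_congr fun x _ => ?_) (filter_mem_eq_of_sublist hπ hAsub)
    by_cases h : x ∈ πA <;> simp [h]
  · rw [List.filter_filter]
    refine Eq.trans (List.filter_congr fun x _ => ?_) (filter_mem_eq_of_sublist hπ hBsub)
    by_cases h : x ∈ πB <;> simp [h]
end

section
/- For duplicate-free lists π_A, π_B over α and any database D, the multiset of transactions that contain some element of π_A ⊕ π_B as a sublist equals g(π_A) ∩ g(π_B); consequently supp(π_A ⊕ π_B), defined as the number of transactions containing some element of π_A ⊕ π_B, equals the cardinality of g(π_A) ∩ g(π_B). -/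
/-! A transaction containing some `m ∈ πA ⊕ πB` contains `πA` and `πB`, which are filters of `m`.
Conversely, if a duplicate-free `t` contains both, then restricting `t` to the entries of `πA` and
`πB` gives a consistent combination, because restricting `t` further to the entries of one of its
sublists returns that sublist (`filter_mem_eq_of_sublist`). So the two multisets filter `D` by
predicates that agree on `D`, and intersection of filters of the same multiset is the filter by the
conjunction, as seen by comparing multiplicities. -/

open scoped Classical

/-- `gcl D π` is the multiset of transactions of `D` of which `π` is a sublist. -/
noncomputable def gcl {α : Type*} (D : Multiset (List α)) (π : List α) :
    Multiset (List α) :=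
  D.filter (fun t => π.Sublist t)

/-- A sublist of a duplicate-free list is recovered from it by restricting to its entries. -/
theorem filter_mem_eq_of_sublist_s3 {α : Type*} [DecidableEq α] {s t : List α} (ht : t.Nodup)
    (h : s.Sublist t) : t.filter (fun x => decide (x ∈ s)) = s := by
  have h1 : s.Sublist (t.filter (fun x => decide (x ∈ s))) := by
    have h2 := h.filter (fun x => decide (x ∈ s))
    rwa [List.filter_eq_self.2 (by simp)] at h2
  refine (h1.eq_of_length_le ?_).symm
  exact ((ht.filter _).subperm (fun x hx => by simpa using (List.mem_filter.1 hx).2)).length_le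

theorem exists_oplus_sublist_iff {α : Type*} [DecidableEq α] {πA πB t : List α} (ht : t.Nodup) :
    (∃ m ∈ oplus πA πB, m.Sublist t) ↔ πA.Sublist t ∧ πB.Sublist t := by
  constructor
  · rintro ⟨m, ⟨-, -, h1, h2⟩, hm⟩
    exact ⟨h1 ▸ List.filter_sublist.trans hm, h2 ▸ List.filter_sublist.trans hm⟩
  · rintro ⟨h1, h2⟩
    refine ⟨t.filter (fun x => decide (x ∈ πA ∨ x ∈ πB)), ⟨ht.filter _, fun x => ?_, ?_, ?_⟩,
      List.filter_sublist⟩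
    · have h3 : x ∈ πA → x ∈ t := fun h => h1.subset h
      have h4 : x ∈ πB → x ∈ t := fun h => h2.subset h
      simp only [List.mem_filter, decide_eq_true_eq]
      tauto
    · rw [List.filter_filter]
      conv_rhs => rw [← filter_mem_eq_of_sublist_s3 ht h1]
      exact List.filter_congr (fun x _ => by simp +contextual)
    · rw [List.filter_filter]
      conv_rhs => rw [← filter_mem_eq_of_sublist_s3 ht h2]
      exact List.filter_congr (fun x _ => by simp +contextual)

/-- the transactions containing some element of `πA ⊕ πB` are
exactly those in `g(πA) ∩ g(πB)`; consequently
`supp(πA ⊕ πB) = #(g(πA) ∩ g(πB))`. -/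
theorem filter_oplus_eq_inter {α : Type*} [Fintype α] [DecidableEq α]
    (D : Multiset (List α)) (hD : ∀ t ∈ D, t.Nodup)
    (πA πB : List α) (hA : πA.Nodup) (hB : πB.Nodup) :
    D.filter (fun t => ∃ m ∈ oplus πA πB, m.Sublist t) = gcl D πA ∩ gcl D πB ∧
      (D.filter (fun t => ∃ m ∈ oplus πA πB, m.Sublist t)).card =
        (gcl D πA ∩ gcl D πB).card := by
  have key : D.filter (fun t => ∃ m ∈ oplus πA πB, m.Sublist t) = gcl D πA ∩ gcl D πB := by
    rw [Multiset.filter_congr (fun t ht => exists_oplus_sublist_iff (hD t ht))]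
    ext t
    simp only [gcl, Multiset.count_inter, Multiset.count_filter]
    by_cases h1 : πA.Sublist t <;> by_cases h2 : πB.Sublist t <;> simp [h1, h2]
  exact ⟨key, congrArg _ key⟩
end

section
/- Let ρ be a nonempty duplicate-free list over α with last element x, and let o be an object not among the entries of ρ. Then the tail extension is the unique consistent combination: ρ ⊕ [x, o] = { ρ ++ [o] }. Consequently, for any database D, g(ρ ++ [o]) = g(ρ) ∩ g([x, o]) and supp(ρ ++ [o]) = #(g(ρ) ∩ g([x, o])). -/
/-!
Write `ρ = σ ++ [x]`. The key fact is that in a duplicate-free list `t`, containing `σ ++ [x]` and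
`[x, o]` as sublists is the same as containing `σ ++ [x, o]`: since `x` occurs only once in `t`,
the two embeddings send `x` to the same position and can be glued there
(`glue_sublist`). The statement on closures is this equivalence, applied to each transaction.
A consistent combination `m` has `ρ` and `[x, o]` as sublists, hence also `ρ ++ [o]`; having
the same entries and no duplicates, it equals `ρ ++ [o]`.
-/

open scoped Classical

/-- The (absolute) support of a ranking `π` in the database `D`. -/
noncomputable def supp {α : Type*} (D : Multiset (List α)) (π : List α) : ℕ :=
  (gcl D π).card

/-- Two embeddings into a duplicate-free list agree on the shared object `x`, so they glue. -/
lemma glue_sublist {α : Type*} {σ t : List α} {x o : α} (ht : t.Nodup)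
    (h₁ : (σ ++ [x]).Sublist t) (h₂ : [x, o].Sublist t) : (σ ++ [x] ++ [o]).Sublist t := by
  obtain ⟨l₁, l₂, rfl, hσ, hx⟩ := List.append_sublist_iff.1 h₁
  have hx₂ : x ∈ l₂ := List.singleton_sublist.1 hx
  have hx₁ : x ∉ l₁ := fun h => (List.disjoint_of_nodup_append ht) h hx₂
  obtain ⟨a, b, hab, ha, hb⟩ := List.sublist_append_iff.1 h₂
  cases a with
  | nil =>
    simp only [List.nil_append] at hab
    subst hab
    simpa using hσ.append hb
  | cons y a =>
    simp only [List.cons_append, List.cons.injEq] at hab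
    exact absurd (ha.subset (by simp [hab.1])) hx₁

/-- the tail extension `ρ ++ [o]` is the unique consistent
combination of `ρ` with `[last(ρ), o]`, and hence its g-closure and support
can be computed by intersecting g-closures. -/
theorem tail_extension {α : Type*} [Fintype α] [DecidableEq α]
    (ρ : List α) (hρ : ρ.Nodup) (hne : ρ ≠ []) (o : α) (ho : o ∉ ρ) :
    oplus ρ [ρ.getLast hne, o] = {ρ ++ [o]} ∧
      ∀ D : Multiset (List α), (∀ t ∈ D, t.Nodup) →
        gcl D (ρ ++ [o]) = gcl D ρ ∩ gcl D [ρ.getLast hne, o] ∧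
          supp D (ρ ++ [o]) = (gcl D ρ ∩ gcl D [ρ.getLast hne, o]).card := by
  obtain rfl | ⟨σ, x, rfl⟩ := List.eq_nil_or_concat' ρ
  · exact absurd rfl hne
  simp only [List.getLast_append_singleton]
  have hnd : (σ ++ [x] ++ [o]).Nodup := by
    rw [← List.concat_eq_append]
    exact hρ.concat ho
  have hxσ : x ∉ σ := fun h => List.disjoint_of_nodup_append hρ h (by simp)
  have hoσ : o ∉ σ := fun h => ho (by simp [h])
  have hox : o ≠ x := fun h => ho (by simp [h])
  refine ⟨?_, fun D hD => ?_⟩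
  · ext m
    rw [Set.mem_singleton_iff]
    constructor
    · rintro ⟨hm, hmem, hA, hB⟩
      have h₁ : (σ ++ [x]).Sublist m := by
        have h := List.filter_sublist (l := m) (p := fun y => decide (y ∈ σ ++ [x]))
        rwa [hA] at h
      have h₂ : [x, o].Sublist m := by
        have h := List.filter_sublist (l := m) (p := fun y => decide (y ∈ [x, o]))
        rwa [hB] at h
      have hsub : m ⊆ σ ++ [x] ++ [o] := by
        intro y hy
        have := (hmem y).1 hy
        simp only [List.mem_append, List.mem_cons, List.not_mem_nil, or_false] at this ⊢
        tauto
      exact ((glue_sublist hm h₁ h₂).eq_of_length_le (hm.subperm hsub).length_le).symm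
    · rintro rfl
      refine ⟨hnd, fun y => ?_, ?_, ?_⟩
      · simp only [List.mem_append, List.mem_cons, List.not_mem_nil, or_false]
        tauto
      · rw [List.filter_append, List.filter_eq_self.2 (by simp), List.filter_eq_nil_iff.2,
          List.append_nil]
        simpa using ho
      · rw [List.append_assoc, List.filter_append, List.filter_eq_nil_iff.2,
          List.filter_eq_self.2 (by simp), List.nil_append, List.singleton_append]
        intro y hy
        have h₁ : y ≠ x := fun h => hxσ (h ▸ hy)
        have h₂ : y ≠ o := fun h => hoσ (h ▸ hy)
        simp [h₁, h₂]
  · have key : gcl D (σ ++ [x] ++ [o]) = gcl D (σ ++ [x]) ∩ gcl D [x, o] := by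
      ext t
      by_cases htD : t ∈ D
      · have hiff : (σ ++ [x] ++ [o]).Sublist t ↔ (σ ++ [x]).Sublist t ∧ [x, o].Sublist t := by
          refine ⟨fun h => ⟨(List.sublist_append_left _ _).trans h, ?_⟩,
            fun h => glue_sublist (hD t htD) h.1 h.2⟩
          rw [List.append_assoc] at h
          exact (List.sublist_append_right _ _).trans h
        simp only [gcl, Multiset.count_inter, Multiset.count_filter, hiff]
        split_ifs <;> simp_all
      · simp [gcl, Multiset.count_inter, Multiset.count_filter, Multiset.count_eq_zero.2 htD]
    exact ⟨key, by rw [supp, key]⟩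
end

section
/- Let π_A ⇀ π_B be a consistent association rule (π_A ⊕ π_B ≠ ∅) with π_A, π_B duplicate-free lists, and let i ∈ entries(π_B). Then i is redundant in π_A ⇀ π_B if and only if i ∈ entries(π_A) and every item directly adjacent to i in the list π_B (its immediate predecessor and its immediate successor, when they exist) belongs to entries(π_A). -/
/-!
If `i ∉ πA`, erasing `i` from `πB` changes the set of entries of every combination, so a redundant
`i` lies in `πA`. For `i ∈ πA`, membership in `oplus πA (πB.erase i)` only weakens the last
condition of `oplus πA πB`, to: the `πB`-part of `m` agrees with `πB` after `i` is dropped from both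
(`mem_oplus_erase_iff`).

Necessity: suppose a neighbour `j` of `i` in `πB` is not in `πA`, and take a combination `m`. Nothing
strictly between `i` and `j` in `m` belongs to `πB`, so moving `j` to just beyond `i` leaves the `πA`-part
alone and only swaps `i` and `j` in the `πB`-part. The new list combines `πA` with `πB.erase i`, but
not with `πB` (`not_redundant_of_succ`, `not_redundant_of_pred`).

Sufficiency: the `πB`-part of a combination of `πA` and `πB.erase i` is `πB` with `i` possibly
reinserted elsewhere. Consistency makes its restriction to `πA` equal to that of `πB`, so `i` has not
jumped over any entry of `πA`; as both neighbours of `i` are in `πA`, `i` has not moved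
(`eq_of_reinsert`).
-/

open scoped Classical

/-- An item `i ∈ entries(πB)` is redundant in the association rule
`πA ⇀ πB` if removing it from the consequent does not change the set of
consistent combinations. -/
def Redundant {α : Type*} [DecidableEq α] (πA πB : List α) (i : α) : Prop :=
  i ∈ πB ∧ oplus πA πB = oplus πA (πB.erase i)

theorem mem_oplus_erase_iff {α : Type*} [DecidableEq α] {πA πB m : List α} {i : α}
    (hB : πB.Nodup) (hiA : i ∈ πA) :
    m ∈ oplus πA (πB.erase i) ↔ m.Nodup ∧ (∀ x, x ∈ m ↔ x ∈ πA ∨ x ∈ πB) ∧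
      m.filter (fun x => decide (x ∈ πA)) = πA ∧
      (m.filter (fun x => decide (x ∈ πB))).erase i = πB.erase i := by
  have hmem : ∀ x, (x ∈ πA ∨ x ∈ πB.erase i) ↔ (x ∈ πA ∨ x ∈ πB) := by
    intro x
    rw [hB.mem_erase_iff]
    by_cases hx : x = i
    · subst hx; simp [hiA]
    · simp [hx]
  simp only [oplus, Set.mem_ofPred_eq, hmem]
  refine and_congr_right fun hm => ?_
  have hf : m.filter (fun x => decide (x ∈ πB.erase i)) =
      (m.filter (fun x => decide (x ∈ πB))).erase i := by
    rw [(hm.filter _).erase_eq_filter, List.filter_filter]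
    refine List.filter_congr fun x _ => ?_
    rw [Bool.eq_iff_iff]
    simp [hB.mem_erase_iff]
  rw [hf]

/-- A permutation `m'` of a combination that keeps its `πA`-part, and keeps its `πB`-part up to
the position of `i`, still has `πB`-part `πB` when `i` is redundant. -/
theorem filter_eq_of_redundant {α : Type*} [DecidableEq α] {πA πB m m' : List α} {i : α}
    (hB : πB.Nodup) (hiA : i ∈ πA) (hred : Redundant πA πB i) (hm : m ∈ oplus πA πB)
    (hp : m'.Perm m)
    (hA' : m'.filter (fun x => decide (x ∈ πA)) = m.filter (fun x => decide (x ∈ πA)))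
    (hB' : (m'.filter (fun x => decide (x ∈ πB))).erase i = πB.erase i) :
    m'.filter (fun x => decide (x ∈ πB)) = πB := by
  obtain ⟨h1, h2, h3, -⟩ := hm
  have : m' ∈ oplus πA (πB.erase i) :=
    (mem_oplus_erase_iff hB hiA).2
      ⟨hp.nodup_iff.2 h1, fun x => by rw [hp.mem_iff, h2], hA'.trans h3, hB'⟩
  rw [← hred.2] at this
  exact this.2.2.2

/-- Splitting a list along two consecutive entries `a, b` of one of its filters. -/
theorem exists_split_of_filter_eq {α : Type*} {p : α → Bool} {m s t : List α} {a b : α}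
    (h : m.filter p = s ++ a :: b :: t) :
    ∃ u v w, m = u ++ a :: (v ++ b :: w) ∧ u.filter p = s ∧ v.filter p = [] ∧ w.filter p = t ∧
      p a = true ∧ p b = true := by
  obtain ⟨m1, m2, rfl, h1, h2⟩ := List.filter_eq_append_iff.1 h
  obtain ⟨l1, l2, rfl, h3, ha, h4⟩ := List.filter_eq_cons_iff.1 h2
  obtain ⟨l3, l4, rfl, h5, hb, h6⟩ := List.filter_eq_cons_iff.1 h4
  refine ⟨m1 ++ l1, l3, l4, by simp, ?_, ?_, h6, ha, hb⟩
  · rw [List.filter_append, h1, List.filter_eq_nil_iff.2 h3, List.append_nil]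
  · exact List.filter_eq_nil_iff.2 h5

theorem not_redundant_of_succ {α : Type*} [DecidableEq α] {πA πB m : List α} {i j : α}
    (hB : πB.Nodup) (hiA : i ∈ πA) (hm : m ∈ oplus πA πB) (hij : [i, j] <:+: πB)
    (hj : j ∉ πA) : ¬ Redundant πA πB i := by
  intro hred
  obtain ⟨s, t, hst⟩ := hij
  have hst : πB = s ++ i :: j :: t := by simp [← hst]
  obtain ⟨u, v, w, rfl, hu, hv, hw, hpi, hpj⟩ := exists_split_of_filter_eq (hm.2.2.2.trans hst)
  have his : i ∉ s := by
    intro h; rw [hst] at hB; simp [List.nodup_append] at hB; grind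
  have hne : i ≠ j := by rintro rfl; exact hj hiA
  -- `j` is moved from behind `v` to just in front of `i`
  have hf : (u ++ j :: i :: (v ++ w)).filter (fun x => decide (x ∈ πB)) = s ++ j :: i :: t := by
    rw [List.filter_append, List.filter_cons, List.filter_cons, List.filter_append, hu, hv, hw,
      if_pos hpi, if_pos hpj, List.nil_append]
  have := filter_eq_of_redundant (m' := u ++ j :: i :: (v ++ w)) hB hiA hred hm
    (by
      refine List.Perm.append_left u ((List.Perm.swap _ _ _).trans (List.Perm.cons _ ?_))
      exact List.perm_middle.symm)
    (by simp [List.filter_cons, hj])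
    (by rw [hf, hst, List.erase_append_right _ his, List.erase_append_right _ his]
        simp [hne.symm])
  rw [hf, hst] at this
  simp [hne.symm] at this

theorem not_redundant_of_pred {α : Type*} [DecidableEq α] {πA πB m : List α} {i j : α}
    (hB : πB.Nodup) (hiA : i ∈ πA) (hm : m ∈ oplus πA πB) (hij : [j, i] <:+: πB)
    (hj : j ∉ πA) : ¬ Redundant πA πB i := by
  intro hred
  obtain ⟨s, t, hst⟩ := hij
  have hst : πB = s ++ j :: i :: t := by simp [← hst]
  obtain ⟨u, v, w, rfl, hu, hv, hw, hpj, hpi⟩ := exists_split_of_filter_eq (hm.2.2.2.trans hst)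
  have his : i ∉ s := by
    intro h; rw [hst] at hB; simp [List.nodup_append] at hB; grind
  have hne : i ≠ j := by rintro rfl; exact hj hiA
  -- `j` is moved from in front of `v` to just behind `i`
  have hf : (u ++ (v ++ i :: j :: w)).filter (fun x => decide (x ∈ πB)) = s ++ i :: j :: t := by
    rw [List.filter_append, List.filter_append, List.filter_cons, List.filter_cons, hu, hv, hw,
      if_pos hpi, if_pos hpj, List.nil_append]
  have := filter_eq_of_redundant (m' := u ++ (v ++ i :: j :: w)) hB hiA hred hm
    (by
      refine List.Perm.append_left u (((List.Perm.swap _ _ _).append_left v).trans ?_)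
      exact List.perm_middle)
    (by simp [List.filter_cons, hj])
    (by rw [hf, hst, List.erase_append_right _ his, List.erase_append_right _ his]
        simp [hne.symm])
  rw [hf, hst] at this
  simp [hne] at this

/-- If `B` and `C` agree once `i` is dropped, and also after filtering by a predicate that holds at
`i` and at both neighbours of `i` in `B`, then `i` has the same position in both. -/
theorem eq_of_reinsert {α : Type*} [DecidableEq α] {p : α → Bool} {B C : List α} {i : α}
    (hB : B.Nodup) (hC : C.Nodup) (hiB : i ∈ B) (hiC : i ∈ C) (hpi : p i = true)
    (he : C.erase i = B.erase i) (hf : C.filter p = B.filter p)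
    (hadj : ∀ j, ([i, j] <:+: B ∨ [j, i] <:+: B) → p j = true) : C = B := by
  obtain ⟨x, y, rfl⟩ := List.append_of_mem hiB
  obtain ⟨x', y', rfl⟩ := List.append_of_mem hiC
  have hx : i ∉ x := by
    intro h; simp [List.nodup_append] at hB; grind
  have hx' : i ∉ x' := by
    intro h; simp [List.nodup_append] at hC; grind
  rw [List.erase_append_right _ hx, List.erase_append_right _ hx', List.erase_cons_head,
    List.erase_cons_head] at he
  have hfx : x'.filter p = x.filter p := by
    rw [List.filter_append, List.filter_append, List.filter_cons_of_pos hpi,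
      List.filter_cons_of_pos hpi] at hf
    have h1 : i ∉ x'.filter p := fun h => hx' (List.mem_of_mem_filter h)
    have h2 : i ∉ x.filter p := fun h => hx (List.mem_of_mem_filter h)
    have h := congrArg (List.takeWhile (fun a => decide (a ≠ i))) hf
    rwa [List.takeWhile_append_of_pos (by grind), List.takeWhile_append_of_pos (by grind),
      List.takeWhile_cons_of_neg (by simp), List.takeWhile_cons_of_neg (by simp),
      List.append_nil, List.append_nil] at h
  -- `z` is the block that `i` would have jumped over; it has no entry satisfying `p`
  rcases List.append_eq_append_iff.1 he with ⟨z, rfl, rfl⟩ | ⟨z, rfl, rfl⟩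
  · rw [List.filter_append, List.self_eq_append_right] at hfx
    rcases List.eq_nil_or_concat z with rfl | ⟨z, b, rfl⟩
    · simp
    · have := hadj b (Or.inr ⟨x' ++ z, y, by simp⟩)
      simp [this] at hfx
  · rw [List.filter_append, List.append_right_eq_self] at hfx
    rcases z with _ | ⟨b, z⟩
    · simp
    · have := hadj b (Or.inl ⟨x, z ++ y', by simp⟩)
      simp [this] at hfx

/-- Lemma 2 of the paper: in a consistent rule `πA ⇀ πB`, an
item `i ∈ entries(πB)` is redundant iff `i ∈ entries(πA)` and every item
directly adjacent to `i` in `πB` also belongs to `entries(πA)`. -/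
theorem redundant_iff_adjacent {α : Type*} [Fintype α] [DecidableEq α]
    (πA πB : List α) (hA : πA.Nodup) (hB : πB.Nodup)
    (hcons : oplus πA πB ≠ ∅) (i : α) (hi : i ∈ πB) :
    Redundant πA πB i ↔
      (i ∈ πA ∧ ∀ j : α, ([i, j] <:+: πB ∨ [j, i] <:+: πB) → j ∈ πA) := by
  obtain ⟨m₀, hm₀⟩ := Set.nonempty_iff_ne_empty.2 hcons
  constructor
  · intro hred
    have hiA : i ∈ πA := by
      have h1 : i ∈ m₀ := (hm₀.2.1 i).2 (Or.inr hi)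
      have h2 := hm₀
      rw [hred.2] at h2
      exact ((h2.2.1 i).1 h1).resolve_right hB.not_mem_erase
    refine ⟨hiA, fun j hj => ?_⟩
    by_contra hjA
    rcases hj with hj | hj
    · exact not_redundant_of_succ hB hiA hm₀ hj hjA hred
    · exact not_redundant_of_pred hB hiA hm₀ hj hjA hred
  · rintro ⟨hiA, hadj⟩
    refine ⟨hi, Set.ext fun m => ?_⟩
    rw [mem_oplus_erase_iff hB hiA]
    constructor
    · rintro ⟨h1, h2, h3, h4⟩
      exact ⟨h1, h2, h3, by rw [h4]⟩
    · rintro ⟨h1, h2, h3, h4⟩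
      refine ⟨h1, h2, h3, ?_⟩
      refine eq_of_reinsert (p := fun x => decide (x ∈ πA)) hB (h1.filter _) hi ?_ ?_ h4 ?_ ?_
      · exact List.mem_filter.2 ⟨(h2 i).2 (Or.inl hiA), by simpa using hi⟩
      · simpa using hiA
      · -- both sides are the restriction of `πA` to the entries of `πB`
        have hcomm : ∀ l : List α,
            (l.filter (fun x => decide (x ∈ πB))).filter (fun x => decide (x ∈ πA)) =
            (l.filter (fun x => decide (x ∈ πA))).filter (fun x => decide (x ∈ πB)) :=
          fun l => List.filter_comm _ _ l
        have h := hcomm m₀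
        rw [hm₀.2.2.1, hm₀.2.2.2] at h
        rw [hcomm, h3, h]
      · intro j hj
        simpa using hadj j hj
end

section
/- If π_A, π_B are duplicate-free lists and i ∈ entries(π_A) ∩ entries(π_B), then π_A ⊕ π_B ⊆ π_A ⊕ (π_B.erase i): removing from the consequent an item that also occurs in the antecedent can only enlarge the set of rankings consistent with the rule. -/
/-!
Since `i` already occurs in `πA`, deleting it from `πB` leaves the union of the entries unchanged,
so only the `πB`-filter condition needs an argument. Restricting `m` to the entries of
`πB.erase i` is the same as restricting it first to `πB`, which gives `πB`, and then dropping `i`;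
for a duplicate-free list, dropping every `i` is `List.erase`.
-/

open scoped Classical

/-- removing from the consequent an item that also occurs in the
antecedent can only enlarge the set of rankings consistent with the rule. -/
theorem oplus_subset_oplus_erase {α : Type*} [Fintype α] [DecidableEq α]
    (πA πB : List α) (hA : πA.Nodup) (hB : πB.Nodup)
    (i : α) (hiA : i ∈ πA) (hiB : i ∈ πB) :
    oplus πA πB ⊆ oplus πA (πB.erase i) := by
  rintro m ⟨hm, hmem, hfA, hfB⟩
  refine ⟨hm, fun x => ?_, hfA, ?_⟩
  · rw [hmem, hB.mem_erase_iff]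
    by_cases hx : x = i
    · subst hx
      simp [hiA]
    · simp [hx]
  · -- Filtering `m` to the entries of `πB` other than `i` is filtering `πB` itself to `≠ i`;
    -- as `πB` has no duplicates, this is the erasure.
    have h : m.filter (fun x => decide (x ∈ πB.erase i))
        = (m.filter (fun x => decide (x ∈ πB))).filter (fun x => x != i) := by
      rw [List.filter_filter]
      refine List.filter_congr fun x _ => ?_
      rw [Bool.eq_iff_iff]
      simp [hB.mem_erase_iff]
    rw [h, hfB, hB.erase_eq_filter]
end

section
/- Let π_A ⇀ π_B be a consistent association rule (π_A ⊕ π_B ≠ ∅) with π_A, π_B duplicate-free lists, and let i ≠ j be two items that are both redundant in π_A ⇀ π_B. Then j is redundant in the rule π_A ⇀ (π_B.erase i); hence the elimination of one redundant item does not change the redundancy status of any other item. -/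
/-!
Write "`x` is before `y` in `l`" for `[x, y] <+ l`. For duplicate-free lists, `m ∈ oplus πA πB`
says that `m` has the right entries and that every pair in order in `πA` or in `πB` is in the
same order in `m` (`mem_oplus_iff`).

Both redundant items lie in `πA`, since otherwise erasing them would change the set of entries of
the combinations. Say `i` is before `j` in `πB`, fix `m₀ ∈ oplus πA πB`, and let `m` be a
combination of `πA` and `πB` without `i, j`. Two splicings of `m` with `m₀` recover the
constraints of `πB`:
* follow `m` on the items before `j` in `m₀`, then follow `m₀`. The result satisfies all
  constraints of `πB.erase i`, hence those of `πB`, so `m` puts `u` before `v` whenever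
  `u` is before `v` in `πB` and `v` is before `j` in `m₀`;
* follow `m₀` up to and including `i`, then follow `m`. In the same way, `m` puts `u` before `v`
  whenever `u` is before `v` in `πB` and `u` is after `i` in `m₀`.
Finally `m` puts `i` before `j`, because both belong to `πA`, whose order agrees with that of `m₀`.
Every remaining pair of `πB` follows by transitivity through `i` and `j`.
-/

open scoped Classical

open List in
theorem pair_trichotomy {α : Type*} {m : List α} {x y : α} (hx : x ∈ m) (hy : y ∈ m)
    (hne : x ≠ y) : [x, y] <+ m ∨ [y, x] <+ m := by
  induction m with
  | nil => simp at hx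
  | cons a l ih =>
    rcases List.mem_cons.1 hx with rfl | hx'
    · rcases List.mem_cons.1 hy with rfl | hy'
      · exact absurd rfl hne
      · exact Or.inl ((List.singleton_sublist.2 hy').cons_cons _)
    · rcases List.mem_cons.1 hy with rfl | hy'
      · exact Or.inr ((List.singleton_sublist.2 hx').cons_cons _)
      · exact (ih hx' hy').imp (fun h => h.cons _) (fun h => h.cons _)

open List in
theorem pair_mem {α : Type*} {m : List α} {x y : α} (h : [x, y] <+ m) : x ∈ m ∧ y ∈ m :=
  ⟨h.subset (by simp), h.subset (by simp)⟩

open List in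
theorem pair_ne {α : Type*} {m : List α} (hm : m.Nodup) {x y : α} (h : [x, y] <+ m) :
    x ≠ y := by
  have := hm.sublist h
  simpa using this

open List in
theorem pair_cons {α : Type*} {a : α} {l : List α} {x y : α} :
    [x, y] <+ a :: l ↔ [x, y] <+ l ∨ (x = a ∧ y ∈ l) := by
  rw [List.sublist_cons_iff]
  simp only [List.cons.injEq]
  constructor
  · rintro (h | ⟨r, ⟨rfl, rfl⟩, h⟩)
    · exact Or.inl h
    · exact Or.inr ⟨rfl, List.singleton_sublist.1 h⟩
  · rintro (h | ⟨rfl, h⟩)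
    · exact Or.inl h
    · exact Or.inr ⟨_, ⟨rfl, rfl⟩, List.singleton_sublist.2 h⟩

open List in
theorem pair_trans {α : Type*} {m : List α} (hm : m.Nodup) {x y z : α}
    (h : [x, y] <+ m) (h' : [y, z] <+ m) : [x, z] <+ m := by
  induction m with
  | nil => simp at h
  | cons a l ih =>
    rw [List.nodup_cons] at hm
    rw [pair_cons] at h h' ⊢
    rcases h with h | ⟨rfl, h⟩
    · rcases h' with h' | ⟨rfl, h'⟩
      · exact Or.inl (ih hm.2 h h')
      · exact absurd (pair_mem h).2 hm.1
    · rcases h' with h' | ⟨rfl, h'⟩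
      · exact Or.inr ⟨rfl, (pair_mem h').2⟩
      · exact absurd h hm.1

open List in
theorem pair_asymm {α : Type*} {m : List α} (hm : m.Nodup) {x y : α}
    (h : [x, y] <+ m) (h' : [y, x] <+ m) : False :=
  pair_ne hm (pair_trans hm h h') rfl

open List in
theorem filter_eq_iff_pair {α : Type*} [DecidableEq α] {m π : List α} (hm : m.Nodup)
    (hπ : π.Nodup) (hsub : ∀ x ∈ π, x ∈ m) :
    m.filter (fun x => decide (x ∈ π)) = π ↔ ∀ x y, [x, y] <+ π → [x, y] <+ m := by
  constructor
  · intro h x y hxy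
    rw [← h] at hxy
    exact hxy.trans List.filter_sublist
  · intro h
    have hperm : m.filter (fun x => decide (x ∈ π)) ~ π := by
      rw [List.perm_ext_iff_of_nodup (hm.filter _) hπ]
      intro a
      simpa using hsub a
    refine hperm.eq_of_pairwise (le := fun x y => [x, y] <+ m) ?_ ?_ ?_
    · intro a b _ _ hab hba
      exact (pair_asymm hm hab hba).elim
    · rw [List.pairwise_iff_forall_sublist]
      intro a b hab
      exact hab.trans List.filter_sublist
    · rw [List.pairwise_iff_forall_sublist]
      intro a b hab
      exact h a b hab

open List in
theorem mem_oplus_iff {α : Type*} [DecidableEq α] {πA πB m : List α} (hA : πA.Nodup)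
    (hB : πB.Nodup) :
    m ∈ oplus πA πB ↔ m.Nodup ∧ (∀ x, x ∈ m ↔ x ∈ πA ∨ x ∈ πB) ∧
      (∀ x y, [x, y] <+ πA → [x, y] <+ m) ∧ (∀ x y, [x, y] <+ πB → [x, y] <+ m) := by
  unfold oplus
  simp only [Set.mem_setOf_eq]
  refine and_congr_right fun hm => and_congr_right fun he => and_congr ?_ ?_
  · exact filter_eq_iff_pair hm hA fun x hx => (he x).2 (Or.inl hx)
  · exact filter_eq_iff_pair hm hB fun x hx => (he x).2 (Or.inr hx)

open List in
theorem pair_erase {α : Type*} [DecidableEq α] {π : List α} (hπ : π.Nodup) {i x y : α} :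
    [x, y] <+ π.erase i ↔ [x, y] <+ π ∧ x ≠ i ∧ y ≠ i := by
  constructor
  · intro h
    refine ⟨h.trans List.erase_sublist, ?_, ?_⟩
    · rintro rfl
      exact hπ.not_mem_erase (pair_mem h).1
    · rintro rfl
      exact hπ.not_mem_erase (pair_mem h).2
  · rintro ⟨h, hx, hy⟩
    rw [hπ.erase_eq_filter]
    have := h.filter (fun a => a != i)
    simpa [hx, hy] using this

/-- The splicing of two rankings along `D`: the items of `D` in the order of `l`, followed by
the other items in the order of `r`. -/
noncomputable def splice {α : Type*} (D : α → Prop) (l r : List α) : List α :=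
  l.filter (fun x => decide (D x)) ++ r.filter (fun x => decide (¬ D x))

theorem mem_splice {α : Type*} {D : α → Prop} {l r : List α} (hlr : ∀ x, x ∈ l ↔ x ∈ r) (x : α) :
    x ∈ splice D l r ↔ x ∈ l := by
  by_cases h : D x <;> simp [splice, h, hlr]

theorem nodup_splice {α : Type*} {D : α → Prop} {l r : List α} (hl : l.Nodup) (hr : r.Nodup) :
    (splice D l r).Nodup := by
  refine (hl.filter _).append (hr.filter _) ?_
  intro x hx hx'
  simp at hx hx'
  exact hx'.2 hx.2

open List in
/-- If `D` does not contain `y` without `x`, the order of `x, y` in the splicing is inherited from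
the list that governs them. -/
theorem pair_splice {α : Type*} {D : α → Prop} {l r : List α} {x y : α}
    (hx : x ∈ l) (hy : y ∈ r) (hD : D y → D x)
    (h1 : D x → D y → [x, y] <+ l) (h2 : ¬ D x → ¬ D y → [x, y] <+ r) :
    [x, y] <+ splice D l r := by
  unfold splice
  by_cases dx : D x
  · by_cases dy : D y
    · have := (h1 dx dy).filter (fun x => decide (D x))
      simp only [dx, dy, decide_true, List.filter_cons_of_pos, List.filter_nil] at this
      exact this.trans (List.sublist_append_left _ _)
    · have a : [x] <+ l.filter (fun x => decide (D x)) := by simp [hx, dx]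
      have b : [y] <+ r.filter (fun x => decide (¬ D x)) := by simp [hy, dy]
      exact a.append b
  · have dy : ¬ D y := fun h => dx (hD h)
    have := (h2 dx dy).filter (fun x => decide (¬ D x))
    simp only [dx, dy, not_false_eq_true, decide_true, List.filter_cons_of_pos,
      List.filter_nil] at this
    exact this.trans (List.sublist_append_right _ _)

open List in
theorem pair_of_pair_splice_left {α : Type*} {D : α → Prop} {l r : List α} (hl : l.Nodup)
    (hr : r.Nodup) {x y : α} (hx : x ∈ l) (hy : y ∈ l) (dx : D x) (dy : D y)
    (h : [x, y] <+ splice D l r) : [x, y] <+ l := by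
  have hn := nodup_splice (D := D) hl hr
  refine (pair_trichotomy hx hy (pair_ne hn h)).resolve_right fun h' => ?_
  have := h'.filter (fun x => decide (D x))
  simp only [dx, dy, decide_true, List.filter_cons_of_pos, List.filter_nil] at this
  exact pair_asymm hn h (this.trans (List.sublist_append_left _ _))

open List in
theorem pair_of_pair_splice_right {α : Type*} {D : α → Prop} {l r : List α} (hl : l.Nodup)
    (hr : r.Nodup) {x y : α} (hx : x ∈ r) (hy : y ∈ r) (dx : ¬ D x) (dy : ¬ D y)
    (h : [x, y] <+ splice D l r) : [x, y] <+ r := by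
  have hn := nodup_splice (D := D) hl hr
  refine (pair_trichotomy hx hy (pair_ne hn h)).resolve_right fun h' => ?_
  have := h'.filter (fun x => decide (¬ D x))
  simp only [dx, dy, not_false_eq_true, decide_true, List.filter_cons_of_pos,
    List.filter_nil] at this
  exact pair_asymm hn h (this.trans (List.sublist_append_right _ _))

theorem Redundant.mem_left {α : Type*} [DecidableEq α] {πA πB : List α} (hB : πB.Nodup)
    (hcons : oplus πA πB ≠ ∅) {i : α} (hi : Redundant πA πB i) : i ∈ πA := by
  obtain ⟨m, hm⟩ := Set.nonempty_iff_ne_empty.2 hcons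
  have h1 : i ∈ m := (hm.2.1 i).2 (Or.inr hi.1)
  rw [hi.2] at hm
  exact ((hm.2.1 i).1 h1).resolve_right hB.not_mem_erase

theorem mem_or_mem_erase_iff {α : Type*} [DecidableEq α] {πA π : List α} {i : α} (hi : i ∈ πA)
    (x : α) : (x ∈ πA ∨ x ∈ π.erase i) ↔ (x ∈ πA ∨ x ∈ π) := by
  by_cases h : x = i
  · subst h; simp [hi]
  · rw [List.mem_erase_of_ne h]

theorem oplus_subset_erase {α : Type*} [DecidableEq α] {πA π : List α} (hA : πA.Nodup)
    (hπ : π.Nodup) {i : α} (hi : i ∈ πA) : oplus πA π ⊆ oplus πA (π.erase i) := by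
  intro m hm
  rw [mem_oplus_iff hA hπ] at hm
  rw [mem_oplus_iff hA (hπ.erase i)]
  obtain ⟨h1, h2, h3, h4⟩ := hm
  exact ⟨h1, fun x => (h2 x).trans (mem_or_mem_erase_iff hi x).symm, h3,
    fun x y h => h4 x y ((pair_erase hπ).1 h).1⟩

open List in
/-- The splicing argument, with the two redundant items named in their order in `πB`. -/
theorem oplus_erase_erase_subset {α : Type*} [DecidableEq α] {πA πB : List α}
    (hA : πA.Nodup) (hB : πB.Nodup) (hcons : oplus πA πB ≠ ∅) {i j : α}
    (hlt : [i, j] <+ πB) (hi : Redundant πA πB i) (hj : Redundant πA πB j) :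
    oplus πA ((πB.erase i).erase j) ⊆ oplus πA πB := by
  have hiA := hi.mem_left hB hcons
  have hjA := hj.mem_left hB hcons
  obtain ⟨m₀, hm₀⟩ := Set.nonempty_iff_ne_empty.2 hcons
  rw [mem_oplus_iff hA hB] at hm₀
  obtain ⟨n₀, e₀, a₀, b₀⟩ := hm₀
  intro m hm
  rw [mem_oplus_iff hA ((hB.erase i).erase j)] at hm
  obtain ⟨n, e', a, b'⟩ := hm
  have e : ∀ x, x ∈ m ↔ x ∈ πA ∨ x ∈ πB := fun x =>
    (e' x).trans ((mem_or_mem_erase_iff hjA x).trans (mem_or_mem_erase_iff hiA x))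
  have b : ∀ x y, [x, y] <+ πB → x ≠ i → y ≠ i → x ≠ j → y ≠ j → [x, y] <+ m :=
    fun x y h h1 h2 h3 h4 =>
      b' x y ((pair_erase (hB.erase i)).2 ⟨(pair_erase hB).2 ⟨h, h1, h2⟩, h3, h4⟩)
  have ee : ∀ x, x ∈ m ↔ x ∈ m₀ := fun x => (e x).trans (e₀ x).symm
  have ij₀ := b₀ _ _ hlt
  -- Follow `m` before `j`, then `m₀`.
  have key1 : ∀ x y, [x, y] <+ πB → [y, j] <+ m₀ → [x, y] <+ m := by
    intro x y hxy hyj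
    have hmem : splice (fun z => [z, j] <+ m₀) m m₀ ∈ oplus πA πB := by
      rw [hi.2, mem_oplus_iff hA (hB.erase i)]
      refine ⟨nodup_splice n n₀, fun z => ?_, fun u v h => ?_, fun u v h => ?_⟩
      · rw [mem_splice ee, e, mem_or_mem_erase_iff hiA]
      · have h0 := a₀ u v h
        exact pair_splice ((ee _).2 (pair_mem h0).1) (pair_mem h0).2
          (fun d => pair_trans n₀ h0 d) (fun _ _ => a u v h) (fun _ _ => h0)
      · rw [pair_erase hB] at h
        have h0 := b₀ u v h.1
        refine pair_splice ((ee _).2 (pair_mem h0).1) (pair_mem h0).2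
          (fun d => pair_trans n₀ h0 d) (fun du dv => ?_) (fun _ _ => h0)
        exact b u v h.1 h.2.1 h.2.2 (pair_ne n₀ du) (pair_ne n₀ dv)
    have h0 := b₀ x y hxy
    exact pair_of_pair_splice_left n n₀ ((ee _).2 (pair_mem h0).1) ((ee _).2 (pair_mem h0).2)
      (pair_trans n₀ h0 hyj) hyj (((mem_oplus_iff hA hB).1 hmem).2.2.2 x y hxy)
  -- Follow `m₀` up to and including `i`, then `m`.
  have key2 : ∀ x y, [x, y] <+ πB → [i, x] <+ m₀ → [x, y] <+ m := by
    intro x y hxy hix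
    have hmem : splice (fun z => ¬ [i, z] <+ m₀) m₀ m ∈ oplus πA πB := by
      rw [hj.2, mem_oplus_iff hA (hB.erase j)]
      refine ⟨nodup_splice n₀ n, fun z => ?_, fun u v h => ?_, fun u v h => ?_⟩
      · rw [mem_splice (fun x => (ee x).symm), e₀, mem_or_mem_erase_iff hjA]
      · have h0 := a₀ u v h
        exact pair_splice (pair_mem h0).1 ((ee _).2 (pair_mem h0).2)
          (fun d d' => d (pair_trans n₀ d' h0)) (fun _ _ => h0) (fun _ _ => a u v h)
      · rw [pair_erase hB] at h
        have h0 := b₀ u v h.1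
        refine pair_splice (pair_mem h0).1 ((ee _).2 (pair_mem h0).2)
          (fun d d' => d (pair_trans n₀ d' h0)) (fun _ _ => h0) (fun du dv => ?_)
        exact b u v h.1 (pair_ne n₀ (not_not.1 du)).symm (pair_ne n₀ (not_not.1 dv)).symm
          h.2.1 h.2.2
    have h0 := b₀ x y hxy
    exact pair_of_pair_splice_right n₀ n ((ee _).2 (pair_mem h0).1) ((ee _).2 (pair_mem h0).2)
      (not_not.2 hix) (not_not.2 (pair_trans n₀ hix h0))
      (((mem_oplus_iff hA hB).1 hmem).2.2.2 x y hxy)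
  -- `πA` contains both items, and its order agrees with that of `m₀`.
  have ij : [i, j] <+ m :=
    a i j ((pair_trichotomy hiA hjA (pair_ne n₀ ij₀)).resolve_right
      fun h => pair_asymm n₀ ij₀ (a₀ _ _ h))
  have toJ : ∀ x, [x, i] <+ πB → [x, j] <+ m := fun x h =>
    pair_trans n (key1 x i h ij₀) ij
  rw [mem_oplus_iff hA hB]
  refine ⟨n, e, a, fun x y hxy => ?_⟩
  have h0 := b₀ x y hxy
  have hxB := (pair_mem hxy).1
  have hyB := (pair_mem hxy).2
  have hiB := hi.1
  have hjB := hj.1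
  by_cases hyj : [y, j] <+ πB
  · exact key1 x y hxy (b₀ _ _ hyj)
  by_cases hix : [i, x] <+ πB
  · exact key2 x y hxy (b₀ _ _ hix)
  -- The remaining pairs satisfy `x ≤ i < j ≤ y` in `πB`.
  have hxj : [x, j] <+ m := by
    by_cases hxi : x = i
    · rw [hxi]; exact ij
    · exact toJ x ((pair_trichotomy hxB hiB hxi).resolve_right hix)
  by_cases hy : y = j
  · rw [hy]; exact hxj
  · have hjy := (pair_trichotomy hyB hjB hy).resolve_left hyj
    exact pair_trans n hxj (key2 j y hjy ij₀)

/-- eliminating one redundant item does not change the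
redundancy status of any other item: if `i ≠ j` are both redundant in
`πA ⇀ πB`, then `j` is redundant in `πA ⇀ πB.erase i`. -/
theorem redundant_erase_of_redundant {α : Type*} [Fintype α] [DecidableEq α]
    (πA πB : List α) (hA : πA.Nodup) (hB : πB.Nodup)
    (hcons : oplus πA πB ≠ ∅)
    (i j : α) (hij : i ≠ j)
    (hi : Redundant πA πB i) (hj : Redundant πA πB j) :
    Redundant πA (πB.erase i) j := by
  refine ⟨(List.mem_erase_of_ne hij.symm).2 hj.1, Set.Subset.antisymm ?_ ?_⟩
  · exact oplus_subset_erase hA (hB.erase i) (hj.mem_left hB hcons)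
  · rw [← hi.2]
    rcases pair_trichotomy hi.1 hj.1 hij with h | h
    · exact oplus_erase_erase_subset hA hB hcons h hi hj
    · rw [List.erase_comm]
      exact oplus_erase_erase_subset hA hB hcons h hj hi
end

section
/- Let D be a database of duplicate-free lists over the finite type α and let π be a duplicate-free list with g(π) ≠ ∅. Then π ∈ h(π) if and only if every duplicate-free list π' with π a sublist of π' and π ≠ π' satisfies supp(π') < supp(π); that is, a ranking is closed exactly when it belongs to its own h-closure. -/
/-!
A ranking `π` is a common subranking of `gcl D π` by definition, so `π ∈ hcl D π` only asks for
maximality: each proper superlist of `π` is missed by some transaction in `gcl D π`. By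
`supp_lt_supp_iff` this is the same as each proper superlist having strictly smaller support.
-/

open scoped Classical

/-- `fcl T` is the set of maximal common subrankings of the multiset of
transactions `T`: duplicate-free lists that are sublists of every `t ∈ T`
and that admit no duplicate-free proper superlist with this property. -/
def fcl {α : Type*} (T : Multiset (List α)) : Set (List α) :=
  {m | m.Nodup ∧ (∀ t ∈ T, m.Sublist t) ∧
    ∀ m' : List α, m'.Nodup → m.Sublist m' → m ≠ m' → ∃ t ∈ T, ¬ m'.Sublist t}

/-- The h-closure of a ranking `π` with respect to the database `D`. -/
noncomputable def hcl {α : Type*} (D : Multiset (List α)) (π : List α) :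
    Set (List α) :=
  fcl (gcl D π)

theorem sublist_of_mem_gcl {α : Type*} {D : Multiset (List α)} {π t : List α}
    (ht : t ∈ gcl D π) : π.Sublist t :=
  (Multiset.mem_filter.1 ht).2

/-- For a superlist of `π`, a strict drop in support means that some transaction containing `π`
fails to contain the superlist: the transactions containing the superlist form a submultiset of
`gcl D π`, and a submultiset has smaller cardinality exactly when it is proper. -/
theorem supp_lt_supp_iff {α : Type*} (D : Multiset (List α)) {π π' : List α}
    (h : π.Sublist π') :
    supp D π' < supp D π ↔ ∃ t ∈ gcl D π, ¬ π'.Sublist t := by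
  have hle : gcl D π' ≤ gcl D π :=
    Multiset.monotone_filter_right D fun _ ht => h.trans ht
  constructor
  · intro hlt
    by_contra! hall
    have hle' : gcl D π ≤ gcl D π' :=
      Multiset.le_filter.2 ⟨Multiset.filter_le _ _, hall⟩
    exact absurd (Multiset.card_le_card hle') (not_le.2 hlt)
  · rintro ⟨t, ht, hnt⟩
    refine Multiset.card_lt_card (lt_of_le_of_ne hle fun heq => hnt ?_)
    rw [← heq] at ht
    exact sublist_of_mem_gcl ht

/-- a ranking (with nonempty g-closure) is closed exactly when
it belongs to its own h-closure. -/
theorem mem_hcl_iff_closed {α : Type*} [Fintype α] [DecidableEq α]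
    (D : Multiset (List α)) (hD : ∀ t ∈ D, t.Nodup)
    (π : List α) (hπ : π.Nodup) (hg : gcl D π ≠ 0) :
    π ∈ hcl D π ↔
      ∀ π' : List α, π'.Nodup → π.Sublist π' → π ≠ π' →
        supp D π' < supp D π := by
  constructor
  · rintro ⟨-, -, hmax⟩ π' hπ' hsub hne
    exact (supp_lt_supp_iff D hsub).2 (hmax π' hπ' hsub hne)
  · intro hclosed
    exact ⟨hπ, fun _ => sublist_of_mem_gcl, fun π' hπ' hsub hne =>
      (supp_lt_supp_iff D hsub).1 (hclosed π' hπ' hsub hne)⟩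
end

section
/- Let D be a database of duplicate-free lists over the finite type α and let π be a duplicate-free list with g(π) ≠ ∅. Then every ranking m in the h-closure h(π) is closed: supp(m) ≥ supp(π), and every duplicate-free list m' with m a sublist of m' and m ≠ m' satisfies supp(m') < supp(m). -/
open scoped Classical

theorem mem_gcl {α : Type*} {D : Multiset (List α)} {π t : List α} :
    t ∈ gcl D π ↔ t ∈ D ∧ π.Sublist t :=
  Multiset.mem_filter

/-- A multiset inequality, stronger than containment of elements, so that it bounds supports.
No `DecidableEq α` is assumed, so the filter uses the same classical instance as `gcl`. -/
theorem gcl_le_gcl {α : Type*} {D : Multiset (List α)} {π m : List α}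
    (h : ∀ t ∈ gcl D π, m.Sublist t) : gcl D π ≤ gcl D m :=
  Multiset.le_filter.2 ⟨Multiset.filter_le _ _, h⟩

/-- Proposition 2 of the paper: every ranking in the h-closure
of `π` is closed. -/
theorem mem_hcl_closed {α : Type*} [Fintype α] [DecidableEq α]
    (D : Multiset (List α)) (hD : ∀ t ∈ D, t.Nodup)
    (π : List α) (hπ : π.Nodup) (hg : gcl D π ≠ 0) :
    ∀ m ∈ hcl D π,
      supp D π ≤ supp D m ∧
        ∀ m' : List α, m'.Nodup → m.Sublist m' → m ≠ m' →
          supp D m' < supp D m := by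
  -- If `m ∈ f(g(π))` then `g(π) ≤ g(m)`, since `m` is common to all of `g(π)`. For a proper
  -- superlist `m'`, maximality gives some `t ∈ g(π)` not containing `m'`; this `t` lies in `g(m)`
  -- but not in `g(m')`, so `g(m') < g(m)`.
  rintro m ⟨-, hcommon, hmax⟩
  have hle : gcl D π ≤ gcl D m := gcl_le_gcl hcommon
  refine ⟨Multiset.card_le_card hle, fun m' hm' hsub hne => Multiset.card_lt_card ?_⟩
  obtain ⟨t, ht, hnot⟩ := hmax m' hm' hsub hne
  refine lt_of_le_of_ne (gcl_le_gcl fun s hs => hsub.trans (mem_gcl.1 hs).2) fun heq => ?_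
  have htm : t ∈ gcl D m := Multiset.mem_of_le hle ht
  rw [← heq] at htm
  exact hnot (mem_gcl.1 htm).2
end

section
/- Let T and T' be multisets of duplicate-free lists over the finite type α with T' ≠ ∅ and every element of T' also an element of T. Then for every maximal common subranking m ∈ f(T) there exists m' ∈ f(T') such that m is a sublist of m': rankings contained in a maximal intersection of transactions can only grow when the set of transactions is reduced. -/
/-!
A maximal common subranking of `T` is in particular a common subranking of `T'`, since every
transaction of `T'` belongs to `T`. Over a finite type every common subranking lies below a
maximal one (`exists_fcl_above`), which gives the required element of `fcl T'`.
-/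

open scoped Classical

/-- Every common subranking extends to a maximal one: a non-maximal one has a strictly longer
common superranking, and lengths of duplicate-free lists are bounded by the number of objects. -/
theorem exists_fcl_above {α : Type*} [Fintype α] (T : Multiset (List α)) (n : ℕ) (m : List α)
    (hn : n = Fintype.card α - m.length) (hm : m.Nodup) (hc : ∀ t ∈ T, m.Sublist t) :
    ∃ m' ∈ fcl T, m.Sublist m' := by
  induction n using Nat.strong_induction_on generalizing m with
  | _ n ih =>
    by_cases h : m ∈ fcl T
    · exact ⟨m, h, List.Sublist.refl m⟩
    · have h2 : ∃ m' : List α, m'.Nodup ∧ m.Sublist m' ∧ m ≠ m' ∧ ∀ t ∈ T, m'.Sublist t := by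
        by_contra hno
        refine h ⟨hm, hc, fun m' h1 h2 h3 => ?_⟩
        by_contra h4
        push Not at h4
        exact hno ⟨m', h1, h2, h3, h4⟩
      obtain ⟨m', hm', hs, hne, hc'⟩ := h2
      have hlt : m.length < m'.length :=
        lt_of_le_of_ne hs.length_le fun e => hne (hs.eq_of_length e)
      have hle : m'.length ≤ Fintype.card α := hm'.length_le_card
      obtain ⟨k, hk, hsk⟩ := ih _ (by omega) m' rfl hm' hc'
      exact ⟨k, hk, hs.trans hsk⟩

/-- rankings contained in a maximal intersection of
transactions can only grow when the set of transactions is reduced. -/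
theorem fcl_grows_of_subset {α : Type*} [Fintype α] [DecidableEq α]
    (T T' : Multiset (List α))
    (hT : ∀ t ∈ T, t.Nodup) (hT' : ∀ t ∈ T', t.Nodup)
    (hne : T' ≠ 0) (hsub : ∀ t ∈ T', t ∈ T) :
    ∀ m ∈ fcl T, ∃ m' ∈ fcl T', m.Sublist m' := by
  rintro m ⟨hm, hmT, -⟩
  exact exists_fcl_above T' _ m rfl hm fun t ht => hmT t (hsub t ht)
end

section
/- Let l and l' be duplicate-free lists over α with the same set of entries. If for all a, b ∈ α the two-element list [a, b] is a sublist of l exactly when it is a sublist of l', then l = l': a ranking is uniquely determined by its set of pairwise preferences. -/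
/-- In a duplicate-free list no object is both above and below another one. -/
theorem not_sublist_swap_of_nodup {α : Type*} {l : List α} (hl : l.Nodup) {a b : α}
    (hab : [a, b].Sublist l) : ¬ [b, a].Sublist l := by
  induction l with
  | nil => simp at hab
  | cons x t ih =>
    obtain ⟨hx, ht⟩ := List.nodup_cons.mp hl
    intro hba
    -- If either pair is embedded with its first entry at `x`, then `x` also occurs in `t`.
    cases hab with
    | cons _ hab =>
      cases hba with
      | cons _ hba => exact ih ht hab hba
      | cons_cons _ _ => exact hx (hab.subset (by simp))
    | cons_cons _ hb =>
      cases hba with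
      | cons _ hba => exact hx (hba.subset (by simp))
      | cons_cons _ _ => exact hx (hb.subset (by simp))

/-- a ranking is uniquely determined by its set of pairwise
preferences: duplicate-free lists with the same entries and the same
two-element sublists are equal. -/
theorem eq_of_pairwise_preferences {α : Type*} [Fintype α] [DecidableEq α]
    (l l' : List α) (hl : l.Nodup) (hl' : l'.Nodup)
    (hent : ∀ x : α, x ∈ l ↔ x ∈ l')
    (hpairs : ∀ a b : α, [a, b].Sublist l ↔ [a, b].Sublist l') :
    l = l' := by
  -- Both lists are sorted by the preference relation of `l`, which is antisymmetric.
  refine List.Perm.eq_of_pairwise (le := fun a b => [a, b].Sublist l) ?_ ?_ ?_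
    ((List.perm_ext_iff_of_nodup hl hl').mpr hent)
  · exact fun a b _ _ hab hba => (not_sublist_swap_of_nodup hl hab hba).elim
  · exact List.pairwise_of_forall_sublist id
  · exact List.pairwise_of_forall_sublist (hpairs _ _).mpr
end
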